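/- The subset S = {0, a, −a, b, −b} of J₂ is closed under the associator: for all x, y, z ∈ S one has (x,y,z) ∈ S. Consequently, substituting a for every even variable and b for every odd variable in any iterated associator built from graded variables yields 0, ±a or ±b. -/

import Mathlib

open Matrix

/-- The Jordan product `x ∘ y = (xy + yx)/2` on `2×2` matrices. -/
noncomputable def jmul {K : Type*} [Field K] (x y : Matrix (Fin 2) (Fin 2) K) :
    Matrix (Fin 2) (Fin 2) K :=
  (2 : K)⁻¹ • (x * y + y * x)

/-- The associator `(x,y,z) = (x∘y)∘z − x∘(y∘z)`. -/
noncomputable def jassoc {K : Type*} [Field K] (x y z : Matrix (Fin 2) (Fin 2) K) :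
    Matrix (Fin 2) (Fin 2) K :=
  jmul (jmul x y) z - jmul x (jmul y z)

/-- The matrix `a = e₁₁ − e₂₂`. -/
def amat (K : Type*) [Field K] : Matrix (Fin 2) (Fin 2) K := !![1, 0; 0, -1]

/-- The matrix `b = e₁₂ + e₂₁`. -/
def bmat (K : Type*) [Field K] : Matrix (Fin 2) (Fin 2) K := !![0, 1; 1, 0]

/-- The even part `J₀ = span{I, a}` of the nonscalar grading. -/
def J0 (K : Type*) [Field K] : Submodule K (Matrix (Fin 2) (Fin 2) K) :=
  Submodule.span K {1, amat K}

/-- The odd part `J₁ = span{b}` of the nonscalar grading. -/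
def J1 (K : Type*) [Field K] : Submodule K (Matrix (Fin 2) (Fin 2) K) :=
  Submodule.span K {bmat K}


/-- The iterated associators built from the generators `a` (for even variables) and
`b` (for odd variables). -/
inductive AssocGen (K : Type*) [Field K] : Matrix (Fin 2) (Fin 2) K → Prop
  | base_a : AssocGen K (amat K)
  | base_b : AssocGen K (bmat K)
  | assoc (x y z : Matrix (Fin 2) (Fin 2) K) :
      AssocGen K x → AssocGen K y → AssocGen K z → AssocGen K (jassoc x y z)

/-!
By polarized Cayley–Hamilton, the Jordan product of two traceless `2 × 2` matrices is the scalar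
matrix `B x y • 1`, where `B x y = tr (x * y) / 2`. Hence `(x, y, z) = B x y • z - B y z • x` for
traceless `x`, `y`, `z`. If the three come from `{0} ∪ E ∪ -E` with `E` orthonormal for `B`, each
coefficient is `0` or `±1`, and when neither vanishes, `x` and `z` are `±y` and the two
terms cancel. The matrices `a` and `b` are traceless and orthonormal.
-/

section SignedSet

variable {G : Type*} [AddGroup G] {E : Set G} {x : G}

/-- The set `{0} ∪ E ∪ -E`, which for `E = {a, b}` is the set `S` of the theorem. -/
def signedSet (E : Set G) : Set G :=
  {x | x = 0 ∨ x ∈ E ∨ -x ∈ E}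

theorem zero_mem_signedSet : 0 ∈ signedSet E :=
  Or.inl rfl

theorem subset_signedSet : E ⊆ signedSet E :=
  fun _ hx ↦ Or.inr (Or.inl hx)

theorem neg_mem_signedSet (hx : x ∈ signedSet E) : -x ∈ signedSet E := by
  rcases hx with rfl | hx | hx
  · exact Or.inl neg_zero
  · exact Or.inr (Or.inr (by rwa [neg_neg]))
  · exact subset_signedSet hx

theorem signedSet_pair (x y : G) : signedSet {x, y} = {0, x, -x, y, -y} := by
  ext w
  simp only [signedSet, Set.mem_ofPred_eq, Set.mem_insert_iff, Set.mem_singleton_iff,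
    neg_eq_iff_eq_neg]
  tauto

end SignedSet

section Associator

variable {K : Type*} [Field K] {x y z : Matrix (Fin 2) (Fin 2) K}
  {E : Set (Matrix (Fin 2) (Fin 2) K)}

/-- The bilinear form `tr (x * y) / 2` on `2 × 2` matrices. The factor `1 / 2` makes it the scalar
value of the Jordan product of traceless matrices. -/
noncomputable def halfTraceForm (K : Type*) [Field K] :
    LinearMap.BilinForm K (Matrix (Fin 2) (Fin 2) K) :=
  (2 : K)⁻¹ • (LinearMap.mul K (Matrix (Fin 2) (Fin 2) K)).compr₂ (traceLinearMap (Fin 2) K K)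

theorem halfTraceForm_apply (x y : Matrix (Fin 2) (Fin 2) K) :
    halfTraceForm K x y = (2 : K)⁻¹ * (x * y).trace :=
  rfl

theorem halfTraceForm_comm (x y : Matrix (Fin 2) (Fin 2) K) :
    halfTraceForm K x y = halfTraceForm K y x := by
  rw [halfTraceForm_apply, halfTraceForm_apply, trace_mul_comm]

theorem mul_add_mul_of_trace_eq_zero {R : Type*} [CommRing R] {x y : Matrix (Fin 2) (Fin 2) R}
    (hx : x.trace = 0) (hy : y.trace = 0) : x * y + y * x = (x * y).trace • 1 := by
  rw [trace_fin_two] at hx hy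
  have hx₁ : x 1 1 = -x 0 0 := (neg_eq_of_add_eq_zero_right hx).symm
  have hy₁ : y 1 1 = -y 0 0 := (neg_eq_of_add_eq_zero_right hy).symm
  ext i j
  fin_cases i <;> fin_cases j <;>
    simp [mul_apply, trace_fin_two, hx₁, hy₁] <;> ring

theorem jmul_of_trace_eq_zero (hx : x.trace = 0) (hy : y.trace = 0) :
    jmul x y = halfTraceForm K x y • 1 := by
  rw [jmul, mul_add_mul_of_trace_eq_zero hx hy, smul_smul, halfTraceForm_apply]

theorem smul_one_jmul (h2 : (2 : K) ≠ 0) (c : K) (x : Matrix (Fin 2) (Fin 2) K) :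
    jmul (c • 1) x = c • x := by
  rw [jmul, smul_one_mul, mul_smul_one, ← two_smul K, inv_smul_smul₀ h2]

theorem jmul_comm (x y : Matrix (Fin 2) (Fin 2) K) : jmul x y = jmul y x := by
  rw [jmul, jmul, add_comm]

theorem jassoc_of_trace_eq_zero (h2 : (2 : K) ≠ 0)
    (hx : x.trace = 0) (hy : y.trace = 0) (hz : z.trace = 0) :
    jassoc x y z = halfTraceForm K x y • z - halfTraceForm K y z • x := by
  rw [jassoc, jmul_of_trace_eq_zero hx hy, jmul_of_trace_eq_zero hy hz, smul_one_jmul h2,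
    jmul_comm x, smul_one_jmul h2]

/-- `E` consists of traceless matrices and is orthonormal for `halfTraceForm`. -/
structure IsTracelessOrthonormal (E : Set (Matrix (Fin 2) (Fin 2) K)) : Prop where
  trace_eq_zero : ∀ x ∈ E, x.trace = 0
  form_self : ∀ x ∈ E, halfTraceForm K x x = 1
  form_of_ne : E.Pairwise fun x y ↦ halfTraceForm K x y = 0

namespace IsTracelessOrthonormal

theorem trace_eq_zero_of_mem_signedSet (hE : IsTracelessOrthonormal E) (hx : x ∈ signedSet E) :
    x.trace = 0 := by
  rcases hx with rfl | hx | hx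
  · exact trace_zero _ _
  · exact hE.trace_eq_zero x hx
  · rw [← neg_eq_zero, ← trace_neg, hE.trace_eq_zero _ hx]

theorem form_eq_zero_or_eq (hE : IsTracelessOrthonormal E) (hx : x ∈ E) (hy : y ∈ E) :
    halfTraceForm K x y = 0 ∨ halfTraceForm K x y = 1 ∧ x = y := by
  obtain rfl | hxy := eq_or_ne x y
  · exact Or.inr ⟨hE.form_self x hx, rfl⟩
  · exact Or.inl (hE.form_of_ne hx hy hxy)

theorem form_eq_zero_or_eq_or_eq_neg (hE : IsTracelessOrthonormal E)
    (hx : x ∈ signedSet E) (hy : y ∈ signedSet E) :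
    halfTraceForm K x y = 0 ∨ (halfTraceForm K x y = 1 ∧ x = y) ∨
      (halfTraceForm K x y = -1 ∧ x = -y) := by
  rcases hx with rfl | hx | hx
  · simp
  · rcases hy with rfl | hy | hy
    · simp
    · exact (hE.form_eq_zero_or_eq hx hy).imp_right Or.inl
    · have h := hE.form_eq_zero_or_eq hx hy
      simp only [map_neg, neg_eq_iff_eq_neg, neg_zero] at h
      exact h.imp_right Or.inr
  · rcases hy with rfl | hy | hy
    · simp
    · have h := hE.form_eq_zero_or_eq hx hy
      simp only [map_neg, LinearMap.neg_apply, neg_eq_iff_eq_neg, neg_zero] at h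
      exact h.imp_right Or.inr
    · have h := hE.form_eq_zero_or_eq hx hy
      simp only [map_neg, LinearMap.neg_apply, neg_neg, neg_inj] at h
      exact h.imp_right Or.inl

theorem form_smul_mem_signedSet (hE : IsTracelessOrthonormal E)
    (hx : x ∈ signedSet E) (hy : y ∈ signedSet E) (hz : z ∈ signedSet E) :
    halfTraceForm K x y • z ∈ signedSet E := by
  rcases hE.form_eq_zero_or_eq_or_eq_neg hx hy with h | ⟨h, -⟩ | ⟨h, -⟩
  · rw [h, zero_smul]
    exact zero_mem_signedSet
  · rwa [h, one_smul]
  · rw [h, neg_one_smul]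
    exact neg_mem_signedSet hz

theorem form_smul_eq_of_form_ne_zero (hE : IsTracelessOrthonormal E)
    (hx : x ∈ signedSet E) (hy : y ∈ signedSet E) (hxy : halfTraceForm K x y ≠ 0) :
    halfTraceForm K x y • y = x := by
  rcases hE.form_eq_zero_or_eq_or_eq_neg hx hy with h | ⟨h, hxy'⟩ | ⟨h, hxy'⟩
  · exact absurd h hxy
  · rw [h, one_smul, hxy']
  · rw [h, neg_one_smul, hxy']

theorem jassoc_mem_signedSet (hE : IsTracelessOrthonormal E) (h2 : (2 : K) ≠ 0)
    (hx : x ∈ signedSet E) (hy : y ∈ signedSet E) (hz : z ∈ signedSet E) :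
    jassoc x y z ∈ signedSet E := by
  rw [jassoc_of_trace_eq_zero h2 (hE.trace_eq_zero_of_mem_signedSet hx)
    (hE.trace_eq_zero_of_mem_signedSet hy) (hE.trace_eq_zero_of_mem_signedSet hz)]
  obtain hxy | hxy := eq_or_ne (halfTraceForm K x y) 0
  · rw [hxy, zero_smul, zero_sub]
    exact neg_mem_signedSet (hE.form_smul_mem_signedSet hy hz hx)
  obtain hyz | hyz := eq_or_ne (halfTraceForm K y z) 0
  · rw [hyz, zero_smul, sub_zero]
    exact hE.form_smul_mem_signedSet hx hy hz
  have cancel : halfTraceForm K x y • z = halfTraceForm K y z • x := by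
    rw [halfTraceForm_comm y z] at hyz ⊢
    calc halfTraceForm K x y • z
        = halfTraceForm K x y • halfTraceForm K z y • y := by
          rw [hE.form_smul_eq_of_form_ne_zero hz hy hyz]
      _ = halfTraceForm K z y • halfTraceForm K x y • y := smul_comm _ _ _
      _ = halfTraceForm K z y • x := by rw [hE.form_smul_eq_of_form_ne_zero hx hy hxy]
  rw [cancel, sub_self]
  exact zero_mem_signedSet

end IsTracelessOrthonormal

theorem isTracelessOrthonormal_amat_bmat (h2 : (2 : K) ≠ 0) :
    IsTracelessOrthonormal {amat K, bmat K} where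
  trace_eq_zero := by simp [amat, bmat, trace_fin_two]
  form_self := by
    simp [halfTraceForm_apply, amat, bmat, trace_fin_two, one_add_one_eq_two, h2]
  form_of_ne := by
    simp [Set.pairwise_insert, halfTraceForm_apply, amat, bmat, trace_fin_two]

theorem AssocGen.mem_of_jassoc_mem {S : Set (Matrix (Fin 2) (Fin 2) K)}
    (ha : amat K ∈ S) (hb : bmat K ∈ S)
    (hS : ∀ x ∈ S, ∀ y ∈ S, ∀ z ∈ S, jassoc x y z ∈ S)
    {w : Matrix (Fin 2) (Fin 2) K} (hw : AssocGen K w) : w ∈ S := by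
  induction hw with
  | base_a => exact ha
  | base_b => exact hb
  | assoc x y z _ _ _ hx hy hz => exact hS x hx y hy z hz

end Associator

/-- The set `S = {0, a, −a, b, −b}` is closed under the associator; consequently every
iterated associator evaluated with `a` for even variables and `b` for odd variables
equals `0`, `±a` or `±b`. -/
theorem stmt14 {K : Type*} [Field K] (h2 : (2 : K) ≠ 0) :
    (∀ x ∈ ({0, amat K, -amat K, bmat K, -bmat K} : Set (Matrix (Fin 2) (Fin 2) K)),
     ∀ y ∈ ({0, amat K, -amat K, bmat K, -bmat K} : Set (Matrix (Fin 2) (Fin 2) K)),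
     ∀ z ∈ ({0, amat K, -amat K, bmat K, -bmat K} : Set (Matrix (Fin 2) (Fin 2) K)),
      jassoc x y z ∈
        ({0, amat K, -amat K, bmat K, -bmat K} : Set (Matrix (Fin 2) (Fin 2) K))) ∧
    (∀ w : Matrix (Fin 2) (Fin 2) K, AssocGen K w →
      w ∈ ({0, amat K, -amat K, bmat K, -bmat K} : Set (Matrix (Fin 2) (Fin 2) K))) := by
  rw [← signedSet_pair]
  have closed : ∀ x ∈ signedSet {amat K, bmat K}, ∀ y ∈ signedSet {amat K, bmat K},
      ∀ z ∈ signedSet {amat K, bmat K}, jassoc x y z ∈ signedSet {amat K, bmat K} :=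
    fun _ hx _ hy _ hz ↦ (isTracelessOrthonormal_amat_bmat h2).jassoc_mem_signedSet h2 hx hy hz
  have ha : amat K ∈ signedSet {amat K, bmat K} := subset_signedSet (Or.inl rfl)
  have hb : bmat K ∈ signedSet {amat K, bmat K} := subset_signedSet (Or.inr rfl)
  exact ⟨closed, fun _ hw ↦ hw.mem_of_jassoc_mem ha hb closed⟩
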